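/- (Mean value theorem for right derivatives.) Let g : [a,b] → ℝ be continuous, and suppose that at every x ∈ [a,b) the right derivative g⁺(x) = lim_{h→0⁺} (g(x+h) − g(x))/h exists. Then there exist points c, d ∈ [a,b) such that g⁺(c) ≤ (g(b) − g(a))/(b − a) ≤ g⁺(d). -/

import Mathlib

open Filter

/-!
As in Rolle's theorem, subtract the chord: `φ x = g x - m * x` with `m = (g b - g a) / (b - a)`
takes equal values at `a` and `b`, so it attains its minimum over `[a, b]` at some `d ≠ b`.
Every chord of `g` starting at `d` and going right then has slope at least `m`, and this bound
passes to every right-hand cluster value of the difference quotients at `d`. The point `c`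
comes from `-g`.
-/

section

open Set Topology

lemma exists_mem_Ico_isMinOn_Icc {α β : Type*} [ConditionallyCompleteLinearOrder α]
    [TopologicalSpace α] [OrderTopology α] [LinearOrder β] [TopologicalSpace β]
    [ClosedIicTopology β] {f : α → β} {a b : α} (hab : a < b) (hf : ContinuousOn f (Icc a b))
    (hfab : f a ≤ f b) : ∃ d ∈ Ico a b, IsMinOn f (Icc a b) d := by
  obtain ⟨d, hd, hmin⟩ := isCompact_Icc.exists_isMinOn (nonempty_Icc.2 hab.le) hf
  obtain rfl | hdb := hd.2.eq_or_lt
  · exact ⟨a, left_mem_Ico.2 hab, fun _ hx => hfab.trans (hmin hx)⟩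
  · exact ⟨d, ⟨hd.1, hdb⟩, hmin⟩

lemma exists_mem_Ico_forall_slope_ge {g : ℝ → ℝ} {a b : ℝ} (hab : a < b)
    (hg : ContinuousOn g (Icc a b)) :
    ∃ d ∈ Ico a b, ∀ x ∈ Ioc d b, slope g a b ≤ slope g d x := by
  set m := slope g a b
  have hm : (b - a) * m = g b - g a := sub_smul_slope g a b
  obtain ⟨d, hd, hmin⟩ := exists_mem_Ico_isMinOn_Icc (f := fun x => g x - m * x) hab
    (by fun_prop) (by linarith)
  refine ⟨d, hd, fun x hx => ?_⟩
  have hdx : g d - m * d ≤ g x - m * x := hmin ⟨hd.1.trans hx.1.le, hx.2⟩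
  rw [slope_def_field, le_div_iff₀ (sub_pos.2 hx.1)]
  linarith

lemma exists_mem_Ico_forall_slope_le {g : ℝ → ℝ} {a b : ℝ} (hab : a < b)
    (hg : ContinuousOn g (Icc a b)) :
    ∃ c ∈ Ico a b, ∀ x ∈ Ioc c b, slope g c x ≤ slope g a b := by
  simpa only [slope_neg_fun, Pi.neg_apply, neg_le_neg_iff] using
    exists_mem_Ico_forall_slope_ge hab hg.neg

lemma mem_of_mapClusterPt_div_of_forall_slope_mem {𝕜 : Type*} [Field 𝕜] [LinearOrder 𝕜]
    [IsStrictOrderedRing 𝕜] [TopologicalSpace 𝕜] [OrderTopology 𝕜] {g : 𝕜 → 𝕜} {x b l : 𝕜}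
    {s : Set 𝕜} (hl : MapClusterPt l (𝓝[>] 0) fun h => (g (x + h) - g x) / h) (hxb : x < b)
    (hs : IsClosed s) (hslope : ∀ y ∈ Ioc x b, slope g x y ∈ s) : l ∈ s := by
  refine hs.mem_of_mapClusterPt hl ?_
  filter_upwards [Ioc_mem_nhdsGT (sub_pos.2 hxb)] with h hh
  have hmem : slope g x (x + h) ∈ s :=
    hslope (x + h) ⟨lt_add_of_pos_right x hh.1, le_sub_iff_add_le'.1 hh.2⟩
  rwa [slope_def_field, add_sub_cancel_left] at hmem

theorem mvt_right_deriv_general {a b : ℝ} (hab : a < b) {g g' : ℝ → ℝ}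
    (hcont : ContinuousOn g (Icc a b))
    (hder : ∀ x ∈ Ico a b, MapClusterPt (g' x) (𝓝[>] 0) fun h => (g (x + h) - g x) / h) :
    ∃ c ∈ Ico a b, ∃ d ∈ Ico a b,
      g' c ≤ (g b - g a) / (b - a) ∧ (g b - g a) / (b - a) ≤ g' d := by
  obtain ⟨c, hc, hslope_c⟩ := exists_mem_Ico_forall_slope_le hab hcont
  obtain ⟨d, hd, hslope_d⟩ := exists_mem_Ico_forall_slope_ge hab hcont
  have hc_le : g' c ∈ Iic (slope g a b) :=
    mem_of_mapClusterPt_div_of_forall_slope_mem (hder c hc) hc.2 isClosed_Iic hslope_c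
  have hd_ge : g' d ∈ Ici (slope g a b) :=
    mem_of_mapClusterPt_div_of_forall_slope_mem (hder d hd) hd.2 isClosed_Ici hslope_d
  rw [← slope_def_field]
  exact ⟨c, hc, d, hd, hc_le, hd_ge⟩

end

/-- **mean value theorem for right derivatives.** Let `g : [a,b] → ℝ` be
continuous, admitting at every `x ∈ [a,b)` a right derivative
`g⁺(x) = lim_{h→0⁺} (g (x + h) - g x)/h`.  Then there are `c, d ∈ [a,b)` with
`g⁺(c) ≤ (g b - g a)/(b - a) ≤ g⁺(d)`. -/
theorem mvt_right_deriv (a b : ℝ) (hab : a < b) (g : ℝ → ℝ) (g' : ℝ → ℝ)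
    (hcont : ContinuousOn g (Set.Icc a b))
    (hder : ∀ x ∈ Set.Ico a b,
      Tendsto (fun h => (g (x + h) - g x) / h) (nhdsWithin 0 (Set.Ioi 0)) (nhds (g' x))) :
    ∃ c ∈ Set.Ico a b, ∃ d ∈ Set.Ico a b,
      g' c ≤ (g b - g a) / (b - a) ∧ (g b - g a) / (b - a) ≤ g' d :=
  mvt_right_deriv_general hab hcont fun x hx => (hder x hx).mapClusterPt
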